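/- Let $n\ge 1$ and $W^n=\{x\in\mathbb R^n : x_1\le x_2\le\dots\le x_n\}$. For $t>0$ let $\phi_t(y)=(2\pi t)^{-1/2}e^{-y^2/(2t)}$; for $m\ge 1$ let $\Phi^{(m)}_t(y)=\int_{-\infty}^y \frac{(y-x)^{m-1}}{(m-1)!}\,\phi_t(x)\,dx$, and for $m\ge 0$ let $\Phi^{(-m)}_t$ be the $m$-th derivative of $\phi_t$ (so $\Phi^{(0)}_t=\phi_t$). Put $r_t(x,x')=\det\{\Phi^{(i-j)}_t(x'_j-x_i)\}_{1\le i,j\le n}$ for $x,x'\in W^n$. Let $f:W^n\to\mathbb R$ be bounded and continuous, and zero on a neighbourhood of the boundary of $W^n$. Then for all $t>0$ and $x\in W^n$ the integral $\int_{W^n} r_t(x,x')f(x')\,dx'$ converges absolutely, and $$\lim_{t\downarrow 0}\int_{W^n} r_t(x,x')f(x')\,dx' = f(x)$$ uniformly for $x$ in each compact subset of $W^n$. If moreover $f$ is uniformly continuous, then the convergence is uniform over all $x\in W^n$, that is, $\sup_{x\in W^n}\left|\int_{W^n} r_t(x,x')f(x')\,dx'-f(x)\right|\to 0$ as $t\downarrow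 0$. -/

import Mathlib

/-- The centered Gaussian density with variance `t`. -/
noncomputable def gauss (t y : ℝ) : ℝ :=
  (Real.sqrt (2 * Real.pi * t))⁻¹ * Real.exp (-y ^ 2 / (2 * t))

/-- `Φ^{(m)}_t` for `m : ℤ`: for `m ≥ 1` the `m`-th iterated integral of the Gaussian
density `φ_t`, for `m = 0` the density itself, and for `m ≤ −1` the `(−m)`-th derivative
of `φ_t`. -/
noncomputable def PhiIter (t : ℝ) (m : ℤ) (y : ℝ) : ℝ :=
  if 1 ≤ m then
    ∫ x in Set.Iic y, ((y - x) ^ (m - 1).toNat / (Nat.factorial (m - 1).toNat : ℝ)) * gauss t x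
  else iteratedDeriv (-m).toNat (fun z => gauss t z) y

/-- The kernel `r_t(x,x') = det{Φ^{(i−j)}_t(x'_j − x_i)}`. -/
noncomputable def rKer (n : ℕ) (t : ℝ) (x x' : Fin n → ℝ) : ℝ :=
  Matrix.det (Matrix.of fun i j : Fin n => PhiIter t ((i : ℤ) - (j : ℤ)) (x' j - x i))

/-- The chamber `W^n = {x : x_1 ≤ … ≤ x_n}`. -/
def Wcham (n : ℕ) : Set (Fin n → ℝ) := {x | Monotone x}

/-!
By the Leibniz formula and Brownian scaling, `r_t(x, x')` is `t^(-n/2)` times the signed sum over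
`σ` of the products of `Φ_1^{(σ j - j)}(z_j)`, where `x' = x ∘ σ + √t z`. Hence
`∫ r_t(x, x') F(x') dx' = ∑ σ, sign σ ∫ (∏ j, Φ_1^{(σ j - j)}(z_j)) F(x ∘ σ + √t z) dz`.
The factors of positive order do not decay at `+∞`. But if `x` and `x'` are both nondecreasing, then
`z` is nondecreasing along every inversion of `σ`, and on this cone each nondecaying factor is
compensated by a factor that decays like a Gaussian, so the products are integrable there and
dominated convergence applies. If `σ ≠ 1` and `x' = x ∘ σ + √t z` is in the chamber, then `x` is
close both to `x'` and to `x' ∘ σ⁻¹`, and `F` vanishes at the latter, outside the interior of the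
chamber; so the term tends to `0`. The term of `σ = 1` is a Gaussian average of `F` around `x`,
which tends to `F x`.
-/

open Asymptotics Filter MeasureTheory Set Topology
open scoped Real
open ProbabilityTheory (gaussianPDFReal)

section GaussianBounds

theorem pow_isBigO_exp_mul_sq (k : ℕ) {a : ℝ} (ha : 0 < a) :
    (fun x : ℝ => x ^ k) =O[⊤] fun x => Real.exp (a * x ^ 2) := by
  refine isBigO_top.2 ⟨k.factorial * Real.exp (1 / (4 * a)), fun x => ?_⟩
  have abs_le : |x| ≤ 1 / (4 * a) + a * x ^ 2 := by
    have : 1 / (4 * a) + a * x ^ 2 - |x| = a * (|x| - 1 / (2 * a)) ^ 2 := by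
      rw [← sq_abs x]; field_simp; ring
    linarith [mul_nonneg ha.le (sq_nonneg (|x| - 1 / (2 * a)))]
  have pow_le : |x| ^ k ≤ Real.exp |x| * k.factorial :=
    (div_le_iff₀ (by positivity)).1 (Real.pow_div_factorial_le_exp |x| (abs_nonneg x) k)
  rw [norm_pow, Real.norm_eq_abs, Real.norm_eq_abs, Real.abs_exp]
  calc |x| ^ k ≤ Real.exp |x| * k.factorial := pow_le
    _ ≤ Real.exp (1 / (4 * a) + a * x ^ 2) * k.factorial := by gcongr
    _ = k.factorial * Real.exp (1 / (4 * a)) * Real.exp (a * x ^ 2) := by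
        rw [Real.exp_add]; ring

theorem polynomial_eval_isBigO_exp_mul_sq (p : Polynomial ℝ) {a : ℝ} (ha : 0 < a) :
    (fun x => p.eval x) =O[⊤] fun x => Real.exp (a * x ^ 2) := by
  simp only [Polynomial.eval_eq_sum_range]
  exact IsBigO.fun_sum fun k _ => (pow_isBigO_exp_mul_sq k ha).const_mul_left _

theorem gauss_nonneg (t y : ℝ) : 0 ≤ gauss t y := by
  unfold gauss; positivity

theorem contDiff_gauss (t : ℝ) {N : WithTop ℕ∞} : ContDiff ℝ N (gauss t) := by
  unfold gauss; fun_prop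

theorem continuous_gauss (t : ℝ) : Continuous (gauss t) :=
  (contDiff_gauss t (N := 0)).continuous

theorem gauss_coe_nnreal (v : NNReal) : gauss v = gaussianPDFReal 0 v := by
  funext y; simp [gauss, gaussianPDFReal]

theorem integral_gauss {t : ℝ} (ht : 0 < t) : ∫ y, gauss t y = 1 := by
  lift t to NNReal using ht.le
  rw [gauss_coe_nnreal]
  exact ProbabilityTheory.integral_gaussianPDFReal_eq_one 0 (NNReal.coe_pos.1 ht).ne'

theorem gauss_sq {s : ℝ} (hs : 0 < s) (y : ℝ) : gauss (s ^ 2) y = s⁻¹ * gauss 1 (s⁻¹ * y) := by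
  have exponent : -y ^ 2 / (2 * s ^ 2) = -(s⁻¹ * y) ^ 2 / (2 * 1) := by field_simp
  rw [gauss, gauss, mul_one (2 * π), Real.sqrt_mul (by positivity), Real.sqrt_sq hs.le,
    mul_inv, exponent]
  ring

theorem gauss_one_eq (y : ℝ) :
    gauss 1 y = (√(2 * π))⁻¹ * Real.exp (-(y ^ 2 / 2)) := by
  rw [gauss, mul_one, mul_one, neg_div]

theorem gauss_one_le_exp (y : ℝ) : gauss 1 y ≤ Real.exp (-(y ^ 2 / 2)) := by
  have sqrt_ge : 1 ≤ √(2 * π) :=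
    Real.one_le_sqrt.2 (by linarith [Real.pi_gt_three])
  rw [gauss_one_eq]
  exact mul_le_of_le_one_left (Real.exp_nonneg _) (inv_le_one_of_one_le₀ sqrt_ge)

end GaussianBounds

section PhiIter

theorem PhiIter_neg_natCast (t : ℝ) (k : ℕ) : PhiIter t (-k) = iteratedDeriv k (gauss t) := by
  funext y
  rw [PhiIter, if_neg (by lia), neg_neg, Int.toNat_natCast]

theorem PhiIter_zero (t : ℝ) : PhiIter t 0 = gauss t := by
  simpa using PhiIter_neg_natCast t 0

theorem PhiIter_natCast_add_one (t : ℝ) (k : ℕ) (y : ℝ) :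
    PhiIter t (k + 1) y = ∫ w in Ioi (0 : ℝ), w ^ k / k.factorial * gauss t (y - w) := by
  rw [PhiIter, if_pos (by lia), add_sub_cancel_right, Int.toNat_natCast,
    ← integral_Ici_eq_integral_Ioi,
    ← (Measure.measurePreserving_sub_left (volume : Measure ℝ) y).setIntegral_preimage_emb
      (Homeomorph.subLeft y).measurableEmbedding]
  simp

theorem measurable_PhiIter (t : ℝ) (m : ℤ) : Measurable (PhiIter t m) := by
  rcases le_or_gt m 0 with hm | hm
  · obtain ⟨k, rfl⟩ := Int.exists_eq_neg_ofNat hm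
    rw [PhiIter_neg_natCast]
    exact ((contDiff_gauss t (N := k)).continuous_iteratedDeriv' k).measurable
  · obtain ⟨k, rfl⟩ := Int.eq_succ_of_zero_lt hm
    rw [show PhiIter t (k + 1) = _ from funext (PhiIter_natCast_add_one t k)]
    refine (StronglyMeasurable.integral_prod_right (Continuous.stronglyMeasurable ?_)).measurable
    have := continuous_gauss t
    unfold Function.uncurry
    fun_prop

theorem PhiIter_sq {s : ℝ} (hs : 0 < s) (m : ℤ) (y : ℝ) :
    PhiIter (s ^ 2) m y = s ^ (m - 1) * PhiIter 1 m (s⁻¹ * y) := by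
  rcases le_or_gt m 0 with hm | hm
  · obtain ⟨k, rfl⟩ := Int.exists_eq_neg_ofNat hm
    rw [PhiIter_neg_natCast, PhiIter_neg_natCast, funext (gauss_sq hs),
      iteratedDeriv_const_mul_field, iteratedDeriv_comp_const_mul (contDiff_gauss 1),
      zpow_sub_one₀ hs.ne', zpow_neg, zpow_natCast, inv_pow]
    ring
  · obtain ⟨k, rfl⟩ := Int.eq_succ_of_zero_lt hm
    rw [PhiIter_natCast_add_one, PhiIter_natCast_add_one, add_sub_cancel_right, zpow_natCast]
    have substitution := integral_comp_mul_left_Ioi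
      (fun w => w ^ k / k.factorial * gauss (s ^ 2) (y - w)) 0 hs
    rw [mul_zero, smul_eq_mul, eq_inv_mul_iff_mul_eq₀ hs.ne'] at substitution
    rw [← substitution, ← integral_const_mul, ← integral_const_mul]
    congr 1 with w
    rw [gauss_sq hs, show s⁻¹ * (y - s * w) = s⁻¹ * y - w by field_simp, mul_pow]
    field_simp

theorem PhiIter_neg_natCast_isBigO (k : ℕ) :
    PhiIter 1 (-k) =O[⊤] fun y => Real.exp (-(1 / 4) * y ^ 2) := by
  have eq_hermite : PhiIter 1 (-k) = fun y => (√(2 * π))⁻¹ * (-1) ^ k *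
      (((Polynomial.hermite k).map (Int.castRingHom ℝ)).eval y * Real.exp (-(y ^ 2 / 2))) := by
    rw [PhiIter_neg_natCast, funext gauss_one_eq]
    funext y
    rw [iteratedDeriv_const_mul_field, iteratedDeriv_eq_iterate,
      Polynomial.deriv_gaussian_eq_hermite_mul_gaussian, Polynomial.eval_map,
      ← algebraMap_int_eq, ← Polynomial.aeval_def]
    ring
  rw [eq_hermite]
  refine IsBigO.const_mul_left ?_ _
  refine ((polynomial_eval_isBigO_exp_mul_sq _ (a := 1 / 4) (by norm_num)).mul
    (isBigO_refl _ _)).congr_right fun y => ?_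
  rw [← Real.exp_add]
  ring_nf

theorem PhiIter_natCast_add_one_isBigO (k : ℕ) {c : ℝ} (hc : 0 < c) {S : Set ℝ} {A : ℝ → ℝ}
    (hA : ∀ y ∈ S, ∀ w > 0, gauss 1 (y - w) ≤ A y * Real.exp (-c * w ^ 2)) :
    PhiIter 1 (k + 1) =O[𝓟 S] A := by
  obtain ⟨D, hD⟩ := isBigO_top.1 (pow_isBigO_exp_mul_sq k (half_pos hc))
  refine isBigO_principal.2
    ⟨∫ w in Ioi (0 : ℝ), D / k.factorial * Real.exp (-(c / 2) * w ^ 2), fun y hy => ?_⟩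
  have A_nonneg : 0 ≤ A y :=
    nonneg_of_mul_nonneg_left ((gauss_nonneg _ _).trans (hA y hy 1 one_pos)) (Real.exp_pos _)
  rw [PhiIter_natCast_add_one, Real.norm_of_nonneg A_nonneg, ← integral_mul_const]
  refine norm_integral_le_of_norm_le
    (((integrable_exp_neg_mul_sq (half_pos hc)).const_mul _).mul_const _).integrableOn
    ((ae_restrict_mem measurableSet_Ioi).mono fun w (hw : 0 < w) => ?_)
  have pow_le : w ^ k ≤ D * Real.exp (c / 2 * w ^ 2) := by
    simpa only [norm_pow, Real.norm_eq_abs, Real.abs_exp, abs_of_pos hw] using hD w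
  rw [Real.norm_of_nonneg (mul_nonneg (by positivity) (gauss_nonneg _ _))]
  calc w ^ k / k.factorial * gauss 1 (y - w)
      ≤ D * Real.exp (c / 2 * w ^ 2) / k.factorial * (A y * Real.exp (-c * w ^ 2)) := by
        gcongr
        · exact gauss_nonneg _ _
        · exact div_nonneg ((pow_nonneg hw.le k).trans pow_le) (Nat.cast_nonneg _)
        · exact hA y hy w hw
    _ = D / k.factorial * (Real.exp (c / 2 * w ^ 2) * Real.exp (-c * w ^ 2)) * A y := by ring
    _ = D / k.factorial * Real.exp (-(c / 2) * w ^ 2) * A y := by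
        rw [← Real.exp_add]; ring_nf

theorem PhiIter_isBigO_exp_mul_sq (m : ℤ) {a : ℝ} (ha : 0 < a) :
    PhiIter 1 m =O[⊤] fun y => Real.exp (a * y ^ 2) := by
  rcases le_or_gt m 0 with hm | hm
  · obtain ⟨k, rfl⟩ := Int.exists_eq_neg_ofNat hm
    refine (PhiIter_neg_natCast_isBigO k).trans (IsBigO.of_norm_le fun y => ?_)
    rw [Real.norm_eq_abs, Real.abs_exp]
    gcongr
    linarith
  · obtain ⟨k, rfl⟩ := Int.eq_succ_of_zero_lt hm
    rw [← principal_univ]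
    refine PhiIter_natCast_add_one_isBigO k (c := a / (1 + 2 * a)) (by positivity)
      fun y _ w _ => (gauss_one_le_exp _).trans ?_
    rw [← Real.exp_add, Real.exp_le_exp]
    have complete_square : a * y ^ 2 + -(a / (1 + 2 * a)) * w ^ 2 + (y - w) ^ 2 / 2
        = ((1 + 2 * a) * y - w) ^ 2 / (2 * (1 + 2 * a)) := by field_simp; ring
    have : 0 ≤ ((1 + 2 * a) * y - w) ^ 2 / (2 * (1 + 2 * a)) := by positivity
    linarith

theorem PhiIter_isBigO_exp_neg_mul_sq (m : ℤ) :
    PhiIter 1 m =O[𝓟 {y | m ≤ 0 ∨ y ≤ 0}] fun y => Real.exp (-(1 / 4) * y ^ 2) := by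
  rcases le_or_gt m 0 with hm | hm
  · obtain ⟨k, rfl⟩ := Int.exists_eq_neg_ofNat hm
    exact (PhiIter_neg_natCast_isBigO k).mono le_top
  · obtain ⟨k, rfl⟩ := Int.eq_succ_of_zero_lt hm
    refine PhiIter_natCast_add_one_isBigO k (c := 1 / 2) (by norm_num)
      fun y hy w hw => (gauss_one_le_exp _).trans ?_
    have y_nonpos : y ≤ 0 := hy.resolve_left hm.not_ge
    rw [← Real.exp_add, Real.exp_le_exp]
    nlinarith [mul_nonneg (neg_nonneg.2 y_nonpos) hw.le, sq_nonneg y]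

theorem PhiIter_isBigO_exp_ite (m : ℤ) {a : ℝ} (ha : 0 < a) :
    PhiIter 1 m =O[⊤] fun y =>
      Real.exp (if m ≤ 0 ∨ y ≤ 0 then -(1 / 4) * y ^ 2 else a * y ^ 2) := by
  rw [← principal_univ, ← union_compl_self {y : ℝ | m ≤ 0 ∨ y ≤ 0}, ← sup_principal]
  refine IsBigO.sup ?_ ?_
  · refine (PhiIter_isBigO_exp_neg_mul_sq m).congr' EventuallyEq.rfl ?_
    exact eventually_principal.2 fun y hy => by simp only [if_pos (show m ≤ 0 ∨ y ≤ 0 from hy)]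
  · refine ((PhiIter_isBigO_exp_mul_sq m ha).mono le_top).congr' EventuallyEq.rfl ?_
    exact eventually_principal.2 fun y hy => by simp only [if_neg (show ¬(m ≤ 0 ∨ y ≤ 0) from hy)]

end PhiIter

section Permutations

variable {ι : Type*} [LinearOrder ι]

theorem exists_ge_perm_apply_le [Finite ι] (σ : Equiv.Perm ι) (j : ι) : ∃ p, j ≤ p ∧ σ p ≤ j := by
  by_contra! h
  have image_eq : σ '' Ici j = Ici j :=
    eq_of_subset_of_ncard_le (image_subset_iff.2 fun p hp => (h p hp).le)
      (ncard_image_of_injective _ σ.injective).ge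
  obtain ⟨p, hp, hpj⟩ := image_eq.ge self_mem_Ici
  exact (h p hp).ne' hpj

theorem exists_le_le_perm_apply [Finite ι] (σ : Equiv.Perm ι) (j : ι) : ∃ p, p ≤ j ∧ j ≤ σ p := by
  obtain ⟨q, hjq, hqj⟩ := exists_ge_perm_apply_le σ⁻¹ j
  exact ⟨σ⁻¹ q, hqj, by simpa using hjq⟩

theorem not_strictMono_comp_perm [Finite ι] {α : Type*} [Preorder α] {x : ι → α} (hx : Monotone x)
    {σ : Equiv.Perm ι} (hσ : σ ≠ 1) : ¬ StrictMono (x ∘ σ) := fun h =>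
  hσ (Equiv.coe_fn_injective
    (StrictMono.eq_id fun _ _ hij => hx.reflect_lt (h hij) : ⇑σ = id))

theorem norm_comp_le {κ κ' : Type*} [Fintype κ] [Fintype κ'] (x : κ → ℝ) (e : κ' → κ) :
    ‖x ∘ e‖ ≤ ‖x‖ :=
  (pi_norm_le_iff_of_nonneg (norm_nonneg _)).2 fun i => norm_le_pi_norm x (e i)

theorem norm_sub_le_norm_sub_comp_perm [Fintype ι] {x x' : ι → ℝ} (hx : Monotone x)
    (hx' : Monotone x') (σ : Equiv.Perm ι) : ‖x' - x‖ ≤ ‖x' - x ∘ σ‖ := by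
  refine (pi_norm_le_iff_of_nonneg (norm_nonneg _)).2 fun j => ?_
  have coord (p : ι) : |x' p - x (σ p)| ≤ ‖x' - x ∘ σ‖ := norm_le_pi_norm (x' - x ∘ σ) p
  rw [Pi.sub_apply, Real.norm_eq_abs, abs_le]
  constructor
  · obtain ⟨p, hpj, hjp⟩ := exists_le_le_perm_apply σ j
    linarith [(abs_le.1 (coord p)).1, hx' hpj, hx hjp]
  · obtain ⟨p, hjp, hpj⟩ := exists_ge_perm_apply_le σ j
    linarith [(abs_le.1 (coord p)).2, hx' hjp, hx hpj]

end Permutations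

section InversionCone

variable {ι : Type*} [Preorder ι]

/-- The vectors that are nondecreasing along every pair of indices whose order `σ` does not
preserve. For `x` and `x'` in the Weyl chamber it contains the displacement `x' - x ∘ σ`, whatever
`x` and `x'` are. -/
def inversionCone (σ : Equiv.Perm ι) : Set (ι → ℝ) :=
  {z | ∀ i j, i ≤ j → σ j ≤ σ i → z i ≤ z j}

theorem isClosed_inversionCone (σ : Equiv.Perm ι) : IsClosed (inversionCone σ) := by
  simp only [inversionCone, ofPred_forall]
  exact isClosed_iInter fun i => isClosed_iInter fun j => isClosed_iInter fun _ =>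
    isClosed_iInter fun _ => isClosed_le (continuous_apply i) (continuous_apply j)

theorem inversionCone_one {ι : Type*} [PartialOrder ι] : inversionCone (1 : Equiv.Perm ι) = univ :=
  eq_univ_of_forall fun z _ _ hij hji => (congrArg z (hij.antisymm hji)).le

theorem mem_inversionCone_of_monotone {σ : Equiv.Perm ι} {x z : ι → ℝ} {s : ℝ} (hs : 0 < s)
    (hx : Monotone x) (hz : Monotone (x ∘ σ + s • z)) : z ∈ inversionCone σ := by
  intro i j hij hji
  have endpoints : x (σ i) + s * z i ≤ x (σ j) + s * z j := hz hij
  exact le_of_mul_le_mul_left (by linarith [hx hji]) hs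

end InversionCone

theorem sum_ite_le_of_forall_exists_le {κ : Type*} [Fintype κ] {G : κ → Prop} [DecidablePred G]
    {b : κ → ℝ} (hb : ∀ j, 0 ≤ b j) (h : ∀ j, ∃ p, G p ∧ b j ≤ b p) {c : ℝ} (hc : 0 ≤ c)
    (hc' : 8 * c * Fintype.card κ ≤ 1) :
    ∑ j, (if G j then -(1 / 4) * b j else c * b j) ≤ -c * ∑ j, b j := by
  have sum_le : ∑ j, b j ≤ Fintype.card κ * ∑ j with G j, b j := by
    rw [← nsmul_eq_mul]
    refine Finset.sum_le_card_nsmul _ _ _ fun j _ => ?_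
    obtain ⟨p, hp, hjp⟩ := h j
    exact hjp.trans (Finset.single_le_sum (fun i _ => hb i) (by simpa using hp))
  have G_nonneg : 0 ≤ ∑ j with G j, b j := Finset.sum_nonneg fun j _ => hb j
  have split := Finset.sum_filter_add_sum_filter_not Finset.univ G b
  rw [Finset.sum_ite, ← Finset.mul_sum, ← Finset.mul_sum]
  nlinarith [mul_le_mul_of_nonneg_left sum_le hc, mul_le_mul_of_nonneg_right hc' G_nonneg,
    mul_nonneg hc G_nonneg]

section PermKernel

variable {n : ℕ}

/-- The term that `σ` contributes, up to its sign, to the Leibniz expansion of `r_1(x, x')`, as a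
function of the displacement `z = x' - x ∘ σ`. -/
noncomputable def permKernel (σ : Equiv.Perm (Fin n)) (z : Fin n → ℝ) : ℝ :=
  ∏ j, PhiIter 1 ((σ j : ℤ) - j) (z j)

theorem measurable_permKernel (σ : Equiv.Perm (Fin n)) : Measurable (permKernel σ) :=
  Finset.measurable_fun_prod _ fun j _ => (measurable_PhiIter 1 _).comp (measurable_pi_apply j)

theorem permKernel_one : permKernel (1 : Equiv.Perm (Fin n)) = fun z => ∏ j, gauss 1 (z j) := by
  funext z; simp [permKernel, PhiIter_zero]

theorem integral_permKernel_one : ∫ z, permKernel (1 : Equiv.Perm (Fin n)) z = 1 := by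
  rw [permKernel_one, integral_fintype_prod_volume_eq_pow (gauss 1), integral_gauss one_pos,
    one_pow]

-- A factor of positive order at a positive argument `z j` does not decay. Then `j < σ j`, so some
-- `p > j` has `σ p ≤ j`; its factor decays, and `z j ≤ z p` on the cone.
theorem exists_sq_le_sq_of_mem_inversionCone {σ : Equiv.Perm (Fin n)} {z : Fin n → ℝ}
    (hz : z ∈ inversionCone σ) (j : Fin n) :
    ∃ p, ((σ p : ℤ) - p ≤ 0 ∨ z p ≤ 0) ∧ z j ^ 2 ≤ z p ^ 2 := by
  by_cases hj : (σ j : ℤ) - j ≤ 0 ∨ z j ≤ 0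
  · exact ⟨j, hj, le_rfl⟩
  · rw [not_or, not_le, not_le, sub_pos] at hj
    have j_lt : j < σ j := by exact_mod_cast hj.1
    obtain ⟨p, hjp, hpj⟩ := exists_ge_perm_apply_le σ j
    have p_le : (σ p : ℕ) ≤ p := hpj.trans hjp
    refine ⟨p, Or.inl (by omega), ?_⟩
    exact pow_le_pow_left₀ hj.2.le (hz j p hjp (hpj.trans j_lt.le)) 2

theorem permKernel_isBigO_exp_neg_mul_sum_sq (σ : Equiv.Perm (Fin n)) :
    permKernel σ =O[𝓟 (inversionCone σ)]
      fun z => Real.exp (-(1 / (8 * (n + 1))) * ∑ j, z j ^ 2) := by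
  set c : ℝ := 1 / (8 * (n + 1)) with hc
  have c_pos : 0 < c := by positivity
  have c_le : 8 * c * Fintype.card (Fin n) ≤ 1 := by
    rw [Fintype.card_fin, hc]; field_simp; linarith
  have factors : permKernel σ =O[𝓟 (inversionCone σ)] fun z => ∏ j, Real.exp
      (if (σ j : ℤ) - j ≤ 0 ∨ z j ≤ 0 then -(1 / 4) * z j ^ 2 else c * z j ^ 2) :=
    (IsBigO.finsetProd fun j _ =>
      (PhiIter_isBigO_exp_ite ((σ j : ℤ) - j) c_pos).comp_tendsto tendsto_top).mono le_top
  refine factors.trans (isBigO_principal.2 ⟨1, fun z hz => ?_⟩)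
  rw [one_mul, ← Real.exp_sum, Real.norm_eq_abs, Real.norm_eq_abs, Real.abs_exp, Real.abs_exp,
    Real.exp_le_exp]
  exact sum_ite_le_of_forall_exists_le (fun j => sq_nonneg (z j))
    (exists_sq_le_sq_of_mem_inversionCone hz) c_pos.le c_le

theorem integrable_exp_neg_mul_sum_sq {ι : Type*} [Fintype ι] {c : ℝ} (hc : 0 < c) :
    Integrable fun z : ι → ℝ => Real.exp (-c * ∑ j, z j ^ 2) := by
  simp only [Finset.mul_sum, Real.exp_sum]
  exact Integrable.fintype_prod fun _ => integrable_exp_neg_mul_sq hc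

theorem integrableOn_permKernel (σ : Equiv.Perm (Fin n)) :
    IntegrableOn (permKernel σ) (inversionCone σ) := by
  obtain ⟨C, hC⟩ := isBigO_principal.1 (permKernel_isBigO_exp_neg_mul_sum_sq σ)
  have c_pos : 0 < 1 / (8 * ((n : ℝ) + 1)) := by positivity
  exact ((integrable_exp_neg_mul_sum_sq c_pos).norm.const_mul C).integrableOn.mono'
    (measurable_permKernel σ).aestronglyMeasurable
    (ae_restrict_of_forall_mem (isClosed_inversionCone σ).measurableSet hC)

theorem integrableOn_permKernel_mul (σ : Equiv.Perm (Fin n)) {g : (Fin n → ℝ) → ℝ}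
    (hg : Measurable g) {B : ℝ} (hB : ∀ z, |g z| ≤ B) :
    IntegrableOn (fun z => permKernel σ z * g z) (inversionCone σ) :=
  (integrableOn_permKernel σ).mul_bdd hg.aestronglyMeasurable (ae_of_all _ hB)

theorem tendsto_setIntegral_permKernel_mul {α : Type*} {l : Filter α} [l.IsCountablyGenerated]
    (σ : Equiv.Perm (Fin n)) {g : α → (Fin n → ℝ) → ℝ} (hg : ∀ q, Measurable (g q)) {B : ℝ}
    (hB : ∀ q z, |g q z| ≤ B) (hlim : ∀ z, Tendsto (fun q => g q z) l (𝓝 0)) :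
    Tendsto (fun q => ∫ z in inversionCone σ, permKernel σ z * g q z) l (𝓝 0) := by
  rw [← integral_zero (Fin n → ℝ) ℝ (μ := volume.restrict (inversionCone σ))]
  refine tendsto_integral_filter_of_dominated_convergence (fun z => ‖permKernel σ z‖ * B)
    (.of_forall fun q => ((measurable_permKernel σ).mul (hg q)).aestronglyMeasurable)
    (.of_forall fun q => ae_of_all _ fun z => ?_)
    ((integrableOn_permKernel σ).norm.mul_const B)
    (ae_of_all _ fun z => by simpa using (hlim z).const_mul (permKernel σ z))
  rw [norm_mul]
  exact mul_le_mul_of_nonneg_left (hB q z) (norm_nonneg _)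

theorem prod_zpow_perm_sub_sub_one (σ : Equiv.Perm (Fin n)) {s : ℝ} (hs : 0 < s) :
    ∏ j : Fin n, s ^ ((σ j : ℤ) - j - 1) = (s ^ n)⁻¹ := by
  simp_rw [zpow_sub₀ hs.ne', zpow_natCast, zpow_one, Finset.prod_div_distrib]
  rw [Equiv.prod_comp σ fun i : Fin n => s ^ (i : ℕ), Fin.prod_const,
    div_self (Finset.prod_pos fun _ _ => by positivity).ne', one_div]

theorem rKer_eq_sum_permKernel {t : ℝ} (ht : 0 < t) (x x' : Fin n → ℝ) :
    rKer n t x x' = (√t ^ n)⁻¹ * ∑ σ : Equiv.Perm (Fin n),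
      (Equiv.Perm.sign σ : ℝ) * permKernel σ ((√t)⁻¹ • (x' - x ∘ σ)) := by
  have sqrt_pos : 0 < √t := Real.sqrt_pos.2 ht
  rw [rKer, Matrix.det_apply', Finset.mul_sum]
  refine Finset.sum_congr rfl fun σ _ => ?_
  rw [← prod_zpow_perm_sub_sub_one σ sqrt_pos, permKernel, mul_left_comm,
    ← Finset.prod_mul_distrib]
  congr 1
  refine Finset.prod_congr rfl fun j _ => ?_
  rw [Matrix.of_apply, Pi.smul_apply, smul_eq_mul, ← PhiIter_sq sqrt_pos, Real.sq_sqrt ht.le,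
    Pi.sub_apply, Function.comp_apply]

end PermKernel

section UniformContinuousAround

/-- Uniform continuity of `F` at the points of `S`. Unlike in `UniformContinuousOn`, only one of
the two points that are compared has to lie in `S`. -/
def UniformContinuousAround {X Y : Type*} [PseudoMetricSpace X] [PseudoMetricSpace Y] (F : X → Y)
    (S : Set X) : Prop :=
  ∀ ε > 0, ∃ δ > 0, ∀ x ∈ S, ∀ y, dist x y < δ → dist (F x) (F y) < ε

theorem uniformContinuousAround_of_isCompact {X Y : Type*} [PseudoMetricSpace X]
    [PseudoMetricSpace Y] {F : X → Y} {K : Set X} (hF : Continuous F) (hK : IsCompact K) :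
    UniformContinuousAround F K := fun ε hε => by
  obtain ⟨δ, hδ, h⟩ := Metric.mem_uniformity_dist.1
    (hK.uniformContinuousAt_of_continuousAt F (fun _ _ => hF.continuousAt)
      (Metric.dist_mem_uniformity hε))
  exact ⟨δ, hδ, fun x hx y hxy => h hxy hx⟩

theorem uniformContinuousAround_indicator {E Y : Type*} [NormedAddCommGroup E] [NormedSpace ℝ E]
    [FiniteDimensional ℝ E] [PseudoMetricSpace Y] [Zero Y] {S : Set E} (hS : IsClosed S)
    {f : E → Y} (hf : UniformContinuousOn f S) (h0 : ∀ x ∈ frontier S, f x = 0) :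
    UniformContinuousAround (S.indicator f) S := fun ε hε => by
  obtain ⟨δ, hδ, h⟩ := Metric.uniformContinuousOn_iff.1 hf ε hε
  refine ⟨δ, hδ, fun x hx y hxy => ?_⟩
  rw [indicator_of_mem hx]
  by_cases hy : y ∈ S
  · rw [indicator_of_mem hy]
    exact h x hx y hy hxy
  · obtain ⟨w, hw, hxw⟩ := exists_mem_frontier_infDist_compl_eq_dist hx
      (ne_univ_iff_exists_notMem S |>.2 ⟨y, hy⟩)
    have w_near : dist x w < δ := (hxw ▸ Metric.infDist_le_dist_of_mem hy).trans_lt hxy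
    rw [indicator_of_notMem hy, ← h0 w hw]
    exact h x hx w (hS.frontier_subset hw) w_near

end UniformContinuousAround

section Convergence

theorem integrable_comp_inv_smul_sub {E Y : Type*} [NormedAddCommGroup E] [NormedSpace ℝ E]
    [FiniteDimensional ℝ E] [MeasurableSpace E] [BorelSpace E] {μ : Measure E} [μ.IsAddHaarMeasure]
    [NormedAddCommGroup Y] {g : E → Y} (hg : Integrable g μ) {s : ℝ} (hs : s ≠ 0) (a : E) :
    Integrable (fun y => g (s⁻¹ • (y - a))) μ :=
  (hg.comp_smul (inv_ne_zero hs)).comp_sub_right a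

theorem abs_comp_perm_add_lt {ι : Type*} [LinearOrder ι] [Fintype ι] {F : (ι → ℝ) → ℝ}
    (hF : ∀ z, ¬ StrictMono z → F z = 0) {x w : ι → ℝ} (hx : Monotone x) {δ ε : ℝ}
    (hδ : ∀ y, dist x y < δ → dist (F x) (F y) < ε) (hw : ‖w‖ < δ) {σ : Equiv.Perm ι}
    (hσ : σ ≠ 1) : |F (x ∘ σ + w)| < 2 * ε := by
  set y := x ∘ σ + w with hy
  by_cases hy_mono : StrictMono y
  · have y_near : dist (F x) (F y) < ε := hδ y <| by
      rw [dist_comm, dist_eq_norm]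
      refine (norm_sub_le_norm_sub_comp_perm hx hy_mono.monotone σ).trans_lt ?_
      rwa [hy, add_sub_cancel_left]
    have comp_near : dist (F x) (F (y ∘ ⇑σ⁻¹)) < ε := hδ _ <| by
      have comp_eq : y ∘ ⇑σ⁻¹ = x + w ∘ ⇑σ⁻¹ := by ext i; simp [hy]
      rw [comp_eq, dist_self_add_right]
      exact (norm_comp_le w _).trans_lt hw
    rw [hF _ (not_strictMono_comp_perm hy_mono.monotone (inv_ne_one.2 hσ)), dist_zero_right]
      at comp_near
    rw [Real.dist_eq] at y_near
    rw [Real.norm_eq_abs] at comp_near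
    linarith [abs_sub_abs_le_abs_sub (F y) (F x), abs_sub_comm (F x) (F y)]
  · have ε_pos : 0 < ε := by simpa using hδ x (by simpa using (norm_nonneg w).trans_lt hw)
    rw [hF y hy_mono, abs_zero]
    positivity

variable {n : ℕ} {F : (Fin n → ℝ) → ℝ} {B t : ℝ} {x : Fin n → ℝ}

theorem tendsto_comp_perm_add_smul_sub_ite (hF : ∀ z, ¬ StrictMono z → F z = 0)
    {S : Set (Fin n → ℝ)} (hS : S ⊆ Wcham n) (hFS : UniformContinuousAround F S)
    (σ : Equiv.Perm (Fin n)) (z : Fin n → ℝ) :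
    Tendsto (fun q : ℝ × (Fin n → ℝ) => F (q.2 ∘ σ + √q.1 • z) - if σ = 1 then F q.2 else 0)
      (𝓝[>] 0 ×ˢ 𝓟 S) (𝓝 0) := by
  refine Metric.tendsto_nhds.2 fun ε hε => ?_
  obtain ⟨δ, hδ, hFδ⟩ := hFS (ε / 2) (half_pos hε)
  have displacement : Tendsto (fun t : ℝ => ‖√t • z‖) (𝓝[>] 0) (𝓝 0) := by
    have cont : Continuous fun t : ℝ => ‖√t • z‖ := by fun_prop
    simpa using (cont.tendsto 0).mono_left nhdsWithin_le_nhds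
  rw [eventually_prod_principal_iff]
  filter_upwards [displacement.eventually_lt_const hδ] with t ht x hx
  rw [dist_zero_right, Real.norm_eq_abs]
  by_cases hσ : σ = 1
  · have near := hFδ x hx (x + √t • z) (by rwa [dist_self_add_right])
    rw [dist_comm, Real.dist_eq] at near
    simpa [hσ] using near.trans (half_lt_self hε)
  · simpa [hσ, mul_div_cancel₀] using abs_comp_perm_add_lt hF (hS hx) (hFδ x hx) ht hσ

theorem comp_perm_add_smul_eq_zero (hF : ∀ z, ¬ StrictMono z → F z = 0) (hx : Monotone x) {s : ℝ}
    (hs : 0 < s) {σ : Equiv.Perm (Fin n)} {z : Fin n → ℝ} (hz : z ∉ inversionCone σ) :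
    F (x ∘ σ + s • z) = 0 :=
  hF _ fun h => hz (mem_inversionCone_of_monotone hs hx h.monotone)

theorem integrable_permKernel_mul (hFm : Measurable F) (hF : ∀ z, ¬ StrictMono z → F z = 0)
    (hB : ∀ z, |F z| ≤ B) (hx : Monotone x) {s : ℝ} (hs : 0 < s) (σ : Equiv.Perm (Fin n)) :
    Integrable fun z => permKernel σ z * F (x ∘ σ + s • z) := by
  refine (integrableOn_permKernel_mul σ (hFm.comp (by fun_prop)) fun z =>
    hB _).integrable_of_forall_notMem_eq_zero fun z hz => ?_
  exact mul_eq_zero_of_right _ (comp_perm_add_smul_eq_zero hF hx hs hz)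

theorem rKer_mul_eq_sum (ht : 0 < t) (x x' : Fin n → ℝ) (F : (Fin n → ℝ) → ℝ) :
    rKer n t x x' * F x' = (√t ^ n)⁻¹ * ∑ σ : Equiv.Perm (Fin n), (Equiv.Perm.sign σ : ℝ) *
      (permKernel σ ((√t)⁻¹ • (x' - x ∘ σ)) * F (x ∘ σ + √t • (√t)⁻¹ • (x' - x ∘ σ))) := by
  simp_rw [rKer_eq_sum_permKernel ht, smul_inv_smul₀ (Real.sqrt_pos.2 ht).ne', add_sub_cancel,
    ← mul_assoc, ← Finset.sum_mul, mul_assoc]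

theorem integrable_rKer_mul (hFm : Measurable F) (hF : ∀ z, ¬ StrictMono z → F z = 0)
    (hB : ∀ z, |F z| ≤ B) (ht : 0 < t) (hx : Monotone x) :
    Integrable fun x' => rKer n t x x' * F x' := by
  have sqrt_pos : 0 < √t := Real.sqrt_pos.2 ht
  simp_rw [rKer_mul_eq_sum ht]
  exact (integrable_finsetSum _ fun σ _ => (integrable_comp_inv_smul_sub
    (integrable_permKernel_mul hFm hF hB hx sqrt_pos σ) sqrt_pos.ne' _).const_mul _).const_mul _

theorem integral_rKer_mul (hFm : Measurable F) (hF : ∀ z, ¬ StrictMono z → F z = 0)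
    (hB : ∀ z, |F z| ≤ B) (ht : 0 < t) (hx : Monotone x) :
    ∫ x', rKer n t x x' * F x' = ∑ σ : Equiv.Perm (Fin n), (Equiv.Perm.sign σ : ℝ) *
      ∫ z in inversionCone σ, permKernel σ z * F (x ∘ σ + √t • z) := by
  have sqrt_pos : 0 < √t := Real.sqrt_pos.2 ht
  have change_of_variables (σ : Equiv.Perm (Fin n)) :
      ∫ x', permKernel σ ((√t)⁻¹ • (x' - x ∘ σ)) * F (x ∘ σ + √t • (√t)⁻¹ • (x' - x ∘ σ)) =
        √t ^ n * ∫ z in inversionCone σ, permKernel σ z * F (x ∘ σ + √t • z) := by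
    rw [integral_sub_right_eq_self fun y =>
        permKernel σ ((√t)⁻¹ • y) * F (x ∘ σ + √t • (√t)⁻¹ • y),
      Measure.integral_comp_inv_smul_of_nonneg volume (fun z => permKernel σ z *
        F (x ∘ σ + √t • z)) sqrt_pos.le, Module.finrank_fin_fun, smul_eq_mul,
      setIntegral_eq_integral_of_forall_compl_eq_zero fun z hz => by
        rw [comp_perm_add_smul_eq_zero hF hx sqrt_pos hz, mul_zero]]
  simp_rw [rKer_mul_eq_sum ht]
  rw [integral_const_mul, integral_finsetSum _ fun σ _ => (integrable_comp_inv_smul_sub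
    (integrable_permKernel_mul hFm hF hB hx sqrt_pos σ) sqrt_pos.ne' _).const_mul _]
  simp_rw [integral_const_mul, change_of_variables, mul_left_comm _ (√t ^ n), ← Finset.mul_sum]
  exact inv_mul_cancel_left₀ (pow_ne_zero n sqrt_pos.ne') _

theorem integral_rKer_mul_sub (hFm : Measurable F) (hF : ∀ z, ¬ StrictMono z → F z = 0)
    (hB : ∀ z, |F z| ≤ B) (ht : 0 < t) (hx : Monotone x) :
    (∫ x', rKer n t x x' * F x') - F x =
      ∑ σ : Equiv.Perm (Fin n), (Equiv.Perm.sign σ : ℝ) * ∫ z in inversionCone σ,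
        permKernel σ z * (F (x ∘ σ + √t • z) - if σ = 1 then F x else 0) := by
  have split (σ : Equiv.Perm (Fin n)) : ∫ z in inversionCone σ,
        permKernel σ z * (F (x ∘ σ + √t • z) - if σ = 1 then F x else 0) =
      (∫ z in inversionCone σ, permKernel σ z * F (x ∘ σ + √t • z)) -
        if σ = 1 then F x else 0 := by
    split_ifs with hσ
    · subst hσ
      simp_rw [mul_sub]
      rw [integral_sub
        (integrable_permKernel_mul hFm hF hB hx (Real.sqrt_pos.2 ht) 1).integrableOn
        ((integrableOn_permKernel 1).mul_const _), integral_mul_const, inversionCone_one,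
        setIntegral_univ, setIntegral_univ, integral_permKernel_one, one_mul]
    · simp_rw [sub_zero]
  simp_rw [integral_rKer_mul hFm hF hB ht hx, split, mul_sub, Finset.sum_sub_distrib, mul_ite,
    mul_zero, Finset.sum_ite_eq', Finset.mem_univ, if_true, Equiv.Perm.sign_one]
  norm_num

theorem tendstoUniformlyOn_integral_rKer_mul (hFm : Measurable F)
    (hF : ∀ z, ¬ StrictMono z → F z = 0) (hB : ∀ z, |F z| ≤ B) {S : Set (Fin n → ℝ)}
    (hS : S ⊆ Wcham n) (hFS : UniformContinuousAround F S) :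
    TendstoUniformlyOn (fun t x => ∫ x', rKer n t x x' * F x') F (𝓝[>] 0) S := by
  have terms (σ : Equiv.Perm (Fin n)) : Tendsto (fun q : ℝ × (Fin n → ℝ) =>
      ∫ z in inversionCone σ, permKernel σ z *
        (F (q.2 ∘ σ + √q.1 • z) - if σ = 1 then F q.2 else 0)) (𝓝[>] 0 ×ˢ 𝓟 S) (𝓝 0) := by
    refine tendsto_setIntegral_permKernel_mul σ (B := B + B)
      (fun q => (hFm.comp (by fun_prop)).sub_const _) (fun q z => ?_)
      (tendsto_comp_perm_add_smul_sub_ite hF hS hFS σ)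
    refine (abs_sub _ _).trans (add_le_add (hB _) ?_)
    split_ifs
    exacts [hB _, abs_zero.trans_le ((abs_nonneg _).trans (hB 0))]
  have sum_terms := tendsto_finsetSum Finset.univ fun σ _ =>
    (terms σ).const_mul (Equiv.Perm.sign σ : ℝ)
  simp_rw [mul_zero, Finset.sum_const_zero] at sum_terms
  rw [tendstoUniformlyOn_iff_tendsto, tendsto_uniformity_iff_dist_tendsto_zero]
  refine (tendsto_zero_iff_norm_tendsto_zero.1 sum_terms).congr' ?_
  rw [EventuallyEq, eventually_prod_principal_iff]
  filter_upwards [self_mem_nhdsWithin] with t ht x hx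
  rw [dist_comm, dist_eq_norm, integral_rKer_mul_sub hFm hF hB ht (hS hx)]

end Convergence

theorem isClosed_Wcham (n : ℕ) : IsClosed (Wcham n) :=
  isClosed_monotone

theorem mem_frontier_Wcham_of_not_strictMono {n : ℕ} {x : Fin n → ℝ} (hx : x ∈ Wcham n)
    (h : ¬ StrictMono x) : x ∈ frontier (Wcham n) := by
  rw [(isClosed_Wcham n).frontier_eq]
  refine ⟨hx, fun x_interior => ?_⟩
  obtain ⟨i, j, hij, hji⟩ : ∃ i j, i < j ∧ x j ≤ x i := by
    simpa only [StrictMono, not_forall, not_lt, exists_prop] using h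
  have cont : Continuous fun r : ℝ => Function.update x j (x j - r) := by fun_prop
  have update_mem : ∀ᶠ r in 𝓝[>] 0, Function.update x j (x j - r) ∈ Wcham n := by
    refine (cont.tendsto 0).mono_left nhdsWithin_le_nhds ?_
    rwa [sub_zero, Function.update_eq_self, ← mem_interior_iff_mem_nhds]
  obtain ⟨r, update_mono, hr⟩ := (update_mem.and self_mem_nhdsWithin).exists
  have update_le := update_mono hij.le
  rw [Function.update_self, Function.update_of_ne hij.ne] at update_le
  have r_pos : 0 < r := hr
  linarith only [update_le, hji, r_pos]

theorem stmt13_general (n : ℕ) (f : (Fin n → ℝ) → ℝ) (hf_cont : ContinuousOn f (Wcham n))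
    (hf_bdd : ∃ C : ℝ, ∀ x ∈ Wcham n, |f x| ≤ C) (hf_frontier : ∀ x ∈ frontier (Wcham n), f x = 0) :
    (∀ t : ℝ, 0 < t → ∀ x ∈ Wcham n, IntegrableOn (fun x' => rKer n t x x' * f x') (Wcham n)) ∧
    (∀ K : Set (Fin n → ℝ), IsCompact K → K ⊆ Wcham n →
      TendstoUniformlyOn (fun t x => ∫ x' in Wcham n, rKer n t x x' * f x') f (𝓝[>] 0) K) ∧
    (UniformContinuousOn f (Wcham n) →
      TendstoUniformlyOn (fun t x => ∫ x' in Wcham n, rKer n t x x' * f x') f (𝓝[>] 0)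
        (Wcham n)) := by
  have closed := isClosed_Wcham n
  set F := (Wcham n).indicator f with hF_def
  have F_cont : Continuous F := continuous_indicator hf_frontier (by rwa [closed.closure_eq])
  have F_zero (z : Fin n → ℝ) (hz : ¬ StrictMono z) : F z = 0 :=
    indicator_apply_eq_zero.2 fun hzW =>
      hf_frontier z (mem_frontier_Wcham_of_not_strictMono hzW hz)
  obtain ⟨C, F_le⟩ : ∃ C, ∀ z, |F z| ≤ C := by
    obtain ⟨C, hC⟩ := hf_bdd
    refine ⟨max C 0, fun z => ?_⟩
    by_cases hz : z ∈ Wcham n <;> simp [hF_def, hz, hC]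
  have rKer_mul (t : ℝ) (x : Fin n → ℝ) : (Wcham n).indicator (fun x' => rKer n t x x' * f x') =
      fun x' => rKer n t x x' * F x' := funext fun x' => indicator_mul_right _ _ _
  simp_rw [← integrable_indicator_iff closed.measurableSet,
    ← integral_indicator closed.measurableSet, rKer_mul]
  have uniform (S : Set (Fin n → ℝ)) (hS : S ⊆ Wcham n) (hFS : UniformContinuousAround F S) :
      TendstoUniformlyOn (fun t x => ∫ x', rKer n t x x' * F x') f (𝓝[>] 0) S :=
    (tendstoUniformlyOn_integral_rKer_mul F_cont.measurable F_zero F_le hS hFS).congr_right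
      fun x hx => indicator_of_mem (hS hx) f
  exact ⟨fun t ht x hx => integrable_rKer_mul F_cont.measurable F_zero F_le ht hx,
    fun K hK hKW => uniform K hKW (uniformContinuousAround_of_isCompact F_cont hK),
    fun hf => uniform _ subset_rfl (uniformContinuousAround_indicator closed hf hf_frontier)⟩

/-- Let `f` be bounded and continuous on `W^n` and zero on a neighbourhood of the boundary of
`W^n`. Then `∫_{W^n} r_t(x,x') f(x') dx'` is an absolutely convergent integral, which tends to
`f(x)` as `t ↓ 0` uniformly on compact subsets of `W^n`, and uniformly over all of `W^n` if `f`
is uniformly continuous. Only the values of `f` on `W^n` matter. -/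
theorem stmt13 (n : ℕ) (hn : 1 ≤ n) (f : (Fin n → ℝ) → ℝ)
    (hf_cont : ContinuousOn f (Wcham n))
    (hf_bdd : ∃ C : ℝ, ∀ x ∈ Wcham n, |f x| ≤ C)
    (hf_bdry : ∃ U : Set (Fin n → ℝ),
      IsOpen U ∧ frontier (Wcham n) ⊆ U ∧ ∀ x ∈ U ∩ Wcham n, f x = 0) :
    (∀ t : ℝ, 0 < t → ∀ x ∈ Wcham n,
      MeasureTheory.IntegrableOn (fun x' => rKer n t x x' * f x') (Wcham n)) ∧
    (∀ K : Set (Fin n → ℝ), IsCompact K → K ⊆ Wcham n →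
      TendstoUniformlyOn
        (fun (t : ℝ) (x : Fin n → ℝ) => ∫ x' in Wcham n, rKer n t x x' * f x')
        f (nhdsWithin (0 : ℝ) (Set.Ioi 0)) K) ∧
    (UniformContinuousOn f (Wcham n) →
      TendstoUniformlyOn
        (fun (t : ℝ) (x : Fin n → ℝ) => ∫ x' in Wcham n, rKer n t x x' * f x')
        f (nhdsWithin (0 : ℝ) (Set.Ioi 0)) (Wcham n)) := by
  obtain ⟨U, -, hU, hfU⟩ := hf_bdry
  exact stmt13_general n f hf_cont hf_bdd fun x hx =>
    hfU x ⟨hU hx, (isClosed_Wcham n).frontier_subset hx⟩
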